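/- arXiv:math/0512053 — 2 statements merged into one kernel-verified Lean document; each statement's English description precedes it below -/
import Mathlib

section
/- For every λ > 0 there exists a function g : ℝ → ℝ which is real-analytic, odd, 2π-periodic with minimal period 2π, not identically zero, and satisfies g''(t) − ⟨g²⟩ g(t) + λ g(t)³ = 0 for all t ∈ ℝ; moreover g is non-degenerate in the space of odd 2π-periodic functions: every C², odd, 2π-periodic function h : ℝ → ℝ satisfying h''(t) − (⟨g²⟩ − 3λ g(t)²) h(t) = 2⟨g h⟩ g(t) for all t is identically zero. -/
open Real

/-- Average of a function over one period `[0, 2π]`. -/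
noncomputable def avg (f : ℝ → ℝ) : ℝ := (1 / (2 * π)) * ∫ t in (0:ℝ)..(2 * π), f t

/-- A primitive of a real function with a holomorphic extension near `x` is analytic at `x`. -/
theorem analyticAt_of_hasDerivAt_of_complex {F f : ℝ → ℝ} {fc : ℂ → ℂ} {x : ℝ}
    (hF : ∀ t, HasDerivAt F (f t) t) (hfc : AnalyticAt ℂ fc x)
    (hre : ∀ t : ℝ, (fc t).re = f t) : AnalyticAt ℝ F x := by
  obtain ⟨r, hr, hball⟩ := Metric.eventually_nhds_iff_ball.1 hfc.eventually_analyticAt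
  have hd : DifferentiableOn ℂ fc (Metric.ball (x : ℂ) r) := fun z hz =>
    (hball z hz).differentiableAt.differentiableWithinAt
  obtain ⟨G, hG⟩ := hd.isExactOn_ball
  have hGa : AnalyticAt ℂ G x := by
    have : DifferentiableOn ℂ G (Metric.ball (x : ℂ) r) := fun z hz =>
      (hG z hz).differentiableAt.differentiableWithinAt
    exact this.analyticAt (Metric.ball_mem_nhds _ hr)
  have hcoe : AnalyticAt ℝ (fun t : ℝ => (t : ℂ)) x := Complex.ofRealCLM.analyticAt x
  have hre_an : AnalyticAt ℝ (fun t : ℝ => (G t).re) x :=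
    (Complex.reCLM.analyticAt _).comp
      (AnalyticAt.fun_comp (g := G) (f := fun t : ℝ => (t : ℂ)) hGa.restrictScalars hcoe)
  have hmem : ∀ t ∈ Metric.ball x r, (t : ℂ) ∈ Metric.ball (x : ℂ) r := by
    intro t ht
    simpa [Metric.mem_ball, Complex.dist_eq, ← Complex.ofReal_sub, Real.dist_eq] using ht
  have hder : ∀ t ∈ Metric.ball x r, HasDerivAt (fun s : ℝ => F s - (G s).re) 0 t := by
    intro t ht
    have h1 := (hG t (hmem t ht)).real_of_complex
    simpa [hre] using (hF t).fun_sub h1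
  have hconst : ∀ t ∈ Metric.ball x r, F t - (G t).re = F x - (G x).re := by
    intro t ht
    exact Metric.isOpen_ball.is_const_of_deriv_eq_zero (convex_ball x r).isPreconnected
      (fun s hs => (hder s hs).differentiableAt.differentiableWithinAt)
      (fun s hs => (hder s hs).deriv) ht (Metric.mem_ball_self hr)
  refine (hre_an.add (analyticAt_const (v := F x - (G x).re))).congr ?_
  filter_upwards [Metric.ball_mem_nhds x hr] with t ht
  have := hconst t ht
  simp only [Pi.add_apply]
  linarith

/-- The inverse of the primitive of a positive even periodic density of mean one, i.e. the odd
solution of the autonomous equation `ψ' = 1 / f ψ`. -/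
theorem exists_amplitude {f : ℝ → ℝ} {fc : ℂ → ℂ} (hcont : Continuous f) (hpos : ∀ x, 0 < f x)
    (heven : ∀ x, f (-x) = f x) (hper : Function.Periodic f (2 * π))
    (hint : ∫ x in (0 : ℝ)..(2 * π), f x = 2 * π) (hfc : ∀ x : ℝ, AnalyticAt ℂ fc x)
    (hre : ∀ t : ℝ, (fc t).re = f t) :
    ∃ ψ : ℝ → ℝ, (∀ t, AnalyticAt ℝ ψ t) ∧ (∀ t, ψ (-t) = -ψ t) ∧
      (∀ t, ψ (t + 2 * π) = ψ t + 2 * π) ∧ StrictMono ψ ∧ Function.Surjective ψ ∧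
      ∀ t, HasDerivAt ψ (f (ψ t))⁻¹ t := by
  have hii : ∀ a b, IntervalIntegrable f MeasureTheory.volume a b :=
    fun a b => hcont.intervalIntegrable a b
  set V : ℝ → ℝ := fun x => ∫ s in (0 : ℝ)..x, f s with hV
  have hVd : ∀ t, HasDerivAt V (f t) t := fun t =>
    intervalIntegral.integral_hasDerivAt_right (hii 0 t)
      hcont.stronglyMeasurable.stronglyMeasurableAtFilter hcont.continuousAt
  have hVmono : StrictMono V := strictMono_of_deriv_pos fun t => by
    rw [(hVd t).deriv]; exact hpos t
  have hVc : Continuous V := continuous_iff_continuousAt.2 fun t => (hVd t).continuousAt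
  have hVodd : ∀ t, V (-t) = -V t := by
    intro t
    have h := intervalIntegral.integral_comp_neg (a := 0) (b := t) f
    simp only [heven, neg_zero] at h
    simp only [hV]
    rw [h, intervalIntegral.integral_symm]
  have hVper : ∀ t, V (t + 2 * π) = V t + 2 * π := by
    intro t
    have h := hper.intervalIntegral_add_eq t 0
    rw [zero_add, hint] at h
    simp only [hV]
    rw [← intervalIntegral.integral_add_adjacent_intervals (hii 0 t) (hii t (t + 2 * π)), h]
  have hVtop : Filter.Tendsto V Filter.atTop Filter.atTop :=
    hper.tendsto_atTop_intervalIntegral_of_pos' (hii _ _) hpos two_pi_pos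
  have hVbot : Filter.Tendsto V Filter.atBot Filter.atBot :=
    hper.tendsto_atBot_intervalIntegral_of_pos' (hii _ _) hpos two_pi_pos
  have hVsurj : Function.Surjective V := hVc.surjective hVtop hVbot
  let e : ℝ ≃o ℝ := hVmono.orderIsoOfSurjective V hVsurj
  have hVe : ∀ t, V (e.symm t) = t := fun t => e.apply_symm_apply t
  have hsm : StrictMono e.symm := e.symm.strictMono
  have hcd : ContDiff ℝ ⊤ (e.toHomeomorph.symm : ℝ → ℝ) := by
    refine e.toHomeomorph.contDiff_symm_deriv (f' := f) (fun x => (hpos x).ne') hVd ?_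
    exact contDiff_iff_contDiffAt.2 fun x =>
      (analyticAt_of_hasDerivAt_of_complex hVd (hfc x) hre).contDiffAt
  refine ⟨e.symm, fun t => ?_, fun t => ?_, fun t => ?_, hsm, e.symm.surjective, fun t => ?_⟩
  · exact hcd.contDiffAt.analyticAt
  · apply hVmono.injective
    rw [hVe, hVodd, hVe]
  · apply hVmono.injective
    rw [hVe, hVper, hVe]
  · exact (hVd (e.symm t)).of_local_left_inverse e.symm.continuous.continuousAt
      (hpos _).ne' (Filter.Eventually.of_forall hVe)

/-- A solution of `h'' = q h` with bounded `q` and vanishing Cauchy data is zero. -/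
theorem eq_zero_of_deriv_deriv_eq_mul {h h' q : ℝ → ℝ} {C : ℝ} (hq : ∀ t, |q t| ≤ C)
    (hh : ∀ t, HasDerivAt h (h' t) t) (hh' : ∀ t, HasDerivAt h' (q t * h t) t)
    (h0 : h 0 = 0) (h0' : h' 0 = 0) : h = 0 := by
  have hlip : ∀ t, LipschitzOnWith (Real.toNNReal (max 1 C))
      (fun p : ℝ × ℝ => (p.2, q t * p.1)) Set.univ := by
    intro t
    refine (LipschitzWith.of_dist_le_mul fun p p' => ?_).lipschitzOnWith
    rw [Real.coe_toNNReal _ (le_max_of_le_left zero_le_one), Prod.dist_eq, Prod.dist_eq]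
    apply max_le
    · calc dist p.2 p'.2 ≤ 1 * max (dist p.1 p'.1) (dist p.2 p'.2) := by
            rw [one_mul]; exact le_max_right _ _
        _ ≤ _ := by gcongr; exact le_max_left _ _
    · calc dist (q t * p.1) (q t * p'.1) = |q t| * dist p.1 p'.1 := by
            rw [Real.dist_eq, Real.dist_eq, ← mul_sub, abs_mul]
        _ ≤ _ := by
            gcongr
            · exact (hq t).trans (le_max_right _ _)
            · exact le_max_left _ _
  have key := ODE_solution_unique_univ (t₀ := 0) (f := fun t => (h t, h' t))
    (g := fun _ => ((0 : ℝ), (0 : ℝ))) hlip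
    (fun t => ⟨(hh t).prodMk (hh' t), Set.mem_univ _⟩)
    (fun t => ⟨(hasDerivAt_const t ((0 : ℝ), (0 : ℝ))).congr_deriv (by ext <;> simp),
      Set.mem_univ _⟩)
    (by simp [h0, h0'])
  funext t
  exact congrArg Prod.fst (congrFun key t)

theorem periodic_of_hasDerivAt {f f' : ℝ → ℝ} {c : ℝ} (hf : ∀ t, HasDerivAt f (f' t) t)
    (hper : Function.Periodic f c) : Function.Periodic f' c := by
  intro t
  have h1 := (hf (t + c)).comp_add_const t c
  rw [show (fun x => f (x + c)) = f from funext hper] at h1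
  exact h1.unique (hf t)

theorem integral_eq_avg (f : ℝ → ℝ) : ∫ t in (0 : ℝ)..(2 * π), f t = 2 * π * avg f := by
  unfold avg
  field_simp

/-- Non-degeneracy of periodic solutions of `g'' = ⟨g²⟩ g - lam g³`, subject to an algebraic
condition on the energy. -/
theorem eq_zero_of_linearized {lam a : ℝ} {g g' h : ℝ → ℝ} (hlam : lam ≠ 0)
    (hg : ∀ t, HasDerivAt g (g' t) t)
    (hg' : ∀ t, HasDerivAt g' (a * g t - lam * g t ^ 3) t)
    (hE : ∀ t, g' t ^ 2 = g' 0 ^ 2 + a * g t ^ 2 - lam / 2 * g t ^ 4)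
    (hper : Function.Periodic g (2 * π)) (hg0 : g 0 = 0) (hg0' : g' 0 ≠ 0)
    (ha : avg (fun s => g s ^ 2) = a)
    (hne : lam * (4 * g' 0 ^ 2 + a ^ 2) ≠ 2 * g' 0 ^ 2)
    (hh : ContDiff ℝ 2 h) (hh0 : h 0 = 0) (hhper : Function.Periodic h (2 * π))
    (heq : ∀ t, deriv (deriv h) t - (a - 3 * lam * g t ^ 2) * h t
      = 2 * avg (fun s => g s * h s) * g t) : h = 0 := by
  have hpi := Real.pi_pos
  set h' := deriv h with hh'def
  set c := avg (fun s => g s * h s) with hc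
  have hhd : ∀ t, HasDerivAt h (h' t) t := fun t =>
    (hh.differentiable (by norm_num) t).hasDerivAt
  have hhd' : ∀ t, HasDerivAt h' ((a - 3 * lam * g t ^ 2) * h t + 2 * c * g t) t := by
    intro t
    have h1 : ContDiff ℝ 1 h' := ((contDiff_succ_iff_deriv (n := 1)).1 (by
      rw [one_add_one_eq_two]; exact hh)).2.2
    have h2 := (h1.differentiable (by norm_num) t).hasDerivAt
    rwa [show deriv h' t = (a - 3 * lam * g t ^ 2) * h t + 2 * c * g t by
      linarith [heq t]] at h2
  have hgc : Continuous g := continuous_iff_continuousAt.2 fun t => (hg t).continuousAt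
  have hgc' : Continuous g' := continuous_iff_continuousAt.2 fun t => (hg' t).continuousAt
  have hhc : Continuous h := hh.continuous
  have hper' := periodic_of_hasDerivAt hg hper
  have hhper' := periodic_of_hasDerivAt hhd hhper
  have hgT : g (2 * π) = 0 := by simpa [hg0] using hper 0
  have hgT' : g' (2 * π) = g' 0 := by simpa using hper' 0
  have hhT : h (2 * π) = 0 := by simpa [hh0] using hhper 0
  have hhT' : h' (2 * π) = h' 0 := by simpa using hhper' 0
  set Y : ℝ → ℝ := fun t => (∫ s in (0 : ℝ)..t, g s ^ 2) - a * t with hY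
  have hYd : ∀ t, HasDerivAt Y (g t ^ 2 - a) t := by
    intro t
    have hc2 : Continuous fun s => g s ^ 2 := by fun_prop
    have h1 := intervalIntegral.integral_hasDerivAt_right (hc2.intervalIntegrable 0 t)
      hc2.stronglyMeasurable.stronglyMeasurableAtFilter hc2.continuousAt
    simpa using h1.fun_sub ((hasDerivAt_id t).const_mul a)
  have hYc : Continuous Y := continuous_iff_continuousAt.2 fun t => (hYd t).continuousAt
  have hY0 : Y 0 = 0 := by simp [hY]
  have hYT : Y (2 * π) = 0 := by
    simp only [hY]
    rw [integral_eq_avg, ha]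
    ring
  set b := avg (fun s => g s ^ 4) with hb
  have hI2 : ∫ t in (0 : ℝ)..(2 * π), g t ^ 2 = 2 * π * a := by rw [integral_eq_avg, ha]
  have hI4 : ∫ t in (0 : ℝ)..(2 * π), g t ^ 4 = 2 * π * b := integral_eq_avg _
  have hIh : ∫ t in (0 : ℝ)..(2 * π), g t * h t = 2 * π * c := integral_eq_avg _
  have ii : ∀ {F : ℝ → ℝ}, Continuous F → IntervalIntegrable F MeasureTheory.volume 0 (2 * π) :=
    fun hF => hF.intervalIntegrable _ _
  have hb_eq : 3 / 2 * lam * b = g' 0 ^ 2 + 2 * a ^ 2 := by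
    have h1 : ∫ t in (0 : ℝ)..(2 * π),
        (g' 0 ^ 2 + 2 * a * g t ^ 2 - 3 / 2 * lam * g t ^ 4) = 0 := by
      rw [intervalIntegral.integral_eq_sub_of_hasDerivAt (f := fun t => g t * g' t)]
      · simp [hg0, hgT]
      · intro t _
        refine ((hg t).fun_mul (hg' t)).congr_deriv ?_
        linear_combination hE t
      · exact ii (by fun_prop)
    rw [intervalIntegral.integral_sub (ii (by fun_prop)) (ii (by fun_prop)),
      intervalIntegral.integral_add (ii (by fun_prop)) (ii (by fun_prop)),
      intervalIntegral.integral_const_mul, intervalIntegral.integral_const_mul, hI2, hI4,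
      intervalIntegral.integral_const, smul_eq_mul] at h1
    have h2 : 2 * π * (g' 0 ^ 2 + 2 * a ^ 2 - 3 / 2 * lam * b) = 0 := by linear_combination h1
    have h3 := (mul_eq_zero.1 h2).resolve_left (by positivity)
    linarith
  have hYg : ∫ t in (0 : ℝ)..(2 * π), Y t * g t * g' t = -(π * (b - a ^ 2)) := by
    have h1 : ∫ t in (0 : ℝ)..(2 * π),
        (Y t * g t * g' t + 1 / 2 * g t ^ 4 - a / 2 * g t ^ 2) = 0 := by
      rw [intervalIntegral.integral_eq_sub_of_hasDerivAt (f := fun t => 1 / 2 * (Y t * g t ^ 2))]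
      · simp [hg0, hgT]
      · intro t _
        refine (((hYd t).fun_mul ((hg t).fun_pow 2)).const_mul (1 / 2)).congr_deriv ?_
        push_cast
        ring
      · exact ii (by fun_prop)
    rw [intervalIntegral.integral_sub (ii (by fun_prop)) (ii (by fun_prop)),
      intervalIntegral.integral_add (ii (by fun_prop)) (ii (by fun_prop)),
      intervalIntegral.integral_const_mul, intervalIntegral.integral_const_mul, hI2, hI4] at h1
    linear_combination h1
  -- the periodic solution of the linearized equation with right-hand side a multiple of `g`
  set κ := a - 2 * a / lam with hκ
  set ρ : ℝ → ℝ := fun t => g t ^ 3 - Y t * g' t + κ * g t with hρ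
  set ρ' : ℝ → ℝ := fun t => 2 * g t ^ 2 * g' t + a * g' t
    - Y t * (a * g t - lam * g t ^ 3) + κ * g' t with hρ'
  have hρd : ∀ t, HasDerivAt ρ (ρ' t) t := by
    intro t
    refine ((((hg t).fun_pow 3).fun_sub ((hYd t).fun_mul (hg' t))).fun_add
      ((hg t).const_mul κ)).congr_deriv ?_
    simp only [hρ']
    push_cast
    ring
  have hρd' : ∀ t, HasDerivAt ρ'
      ((a - 3 * lam * g t ^ 2) * ρ t + (4 * g' 0 ^ 2 + 2 * a ^ 2) * g t) t := by
    intro t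
    refine (((((((hg t).fun_pow 2).const_mul 2).fun_mul (hg' t)).fun_add
      ((hg' t).const_mul a)).fun_sub ((hYd t).fun_mul
        (((hg t).const_mul a).fun_sub (((hg t).fun_pow 3).const_mul lam)))).fun_add
      ((hg' t).const_mul κ)).congr_deriv ?_
    have hκl : κ * lam = a * lam - 2 * a := by rw [hκ]; field_simp
    simp only [hρ]
    push_cast
    linear_combination 4 * g t * hE t + 2 * g t ^ 3 * hκl
  have hρc : Continuous ρ := by fun_prop
  have hρg : ∫ t in (0 : ℝ)..(2 * π), ρ t * g t = 2 * π * (g' 0 ^ 2 / lam + a ^ 2 / 2) := by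
    have h1 : ∀ t, ρ t * g t = g t ^ 4 - Y t * g t * g' t + κ * g t ^ 2 := by
      intro t; simp only [hρ]; ring
    simp only [h1]
    rw [intervalIntegral.integral_add (ii (by fun_prop)) (ii (by fun_prop)),
      intervalIntegral.integral_sub (ii (by fun_prop)) (ii (by fun_prop)),
      intervalIntegral.integral_const_mul, hI2, hI4, hYg, hκ]
    field_simp
    linear_combination 2 * hb_eq
  have hc0 : c = 0 := by
    have h1 : ∫ t in (0 : ℝ)..(2 * π),
        ((4 * g' 0 ^ 2 + 2 * a ^ 2) * (g t * h t) - 2 * c * (ρ t * g t)) = 0 := by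
      rw [intervalIntegral.integral_eq_sub_of_hasDerivAt (f := fun t => ρ' t * h t - ρ t * h' t)]
      · simp [hρ, hg0, hgT, hh0, hhT, hY0, hYT]
      · intro t _
        refine (((hρd' t).fun_mul (hhd t)).fun_sub ((hρd t).fun_mul (hhd' t))).congr_deriv ?_
        ring
      · exact ii (by fun_prop)
    rw [intervalIntegral.integral_sub (ii (by fun_prop)) (ii (by fun_prop)),
      intervalIntegral.integral_const_mul, intervalIntegral.integral_const_mul, hIh, hρg] at h1
    have h2 : 2 * π * (lam * (4 * g' 0 ^ 2 + a ^ 2) - 2 * g' 0 ^ 2) * c = 0 := by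
      field_simp at h1 ⊢
      linear_combination h1
    exact (mul_eq_zero.1 h2).resolve_left
      (mul_ne_zero (by positivity) (sub_ne_zero.2 hne))
  have hh0' : h' 0 = 0 := by
    have h1 : ∫ t in (0 : ℝ)..(2 * π), 2 * a * (g t * h t) = -(2 * π * g' 0 * h' 0) := by
      rw [intervalIntegral.integral_eq_sub_of_hasDerivAt
        (f := fun t => (2 * g' t + t * (a * g t - lam * g t ^ 3)) * h t
          - (g t + t * g' t) * h' t)]
      · simp [hg0, hgT, hh0, hhT, hgT', hhT']
      · intro t _
        refine (((((hg' t).const_mul 2).fun_add ((hasDerivAt_id' t).fun_mul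
          (((hg t).const_mul a).fun_sub (((hg t).fun_pow 3).const_mul lam)))).fun_mul
          (hhd t)).fun_sub (((hg t).fun_add ((hasDerivAt_id' t).fun_mul (hg' t))).fun_mul
          (hhd' t))).congr_deriv ?_
        rw [hc0]
        push_cast
        ring
      · exact ii (by fun_prop)
    rw [intervalIntegral.integral_const_mul, hIh, hc0] at h1
    have h2 : 2 * π * g' 0 * h' 0 = 0 := by linarith
    exact (mul_eq_zero.1 h2).resolve_left (mul_ne_zero (by positivity) hg0')
  have hqc : Continuous fun t => a - 3 * lam * g t ^ 2 := by fun_prop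
  have hqper : Function.Periodic (fun t => a - 3 * lam * g t ^ 2) (2 * π) := fun t => by
    simp only [hper t]
  obtain ⟨C, hC⟩ := hqper.isBounded_of_continuous two_pi_pos.ne' hqc |>.exists_norm_le
  refine eq_zero_of_deriv_deriv_eq_mul (C := C) (fun t => hC _ ⟨t, rfl⟩) hhd (fun t => ?_) hh0 hh0'
  simpa [hc0] using hhd' t

/-- The integrand `√(r² cos² θ + sin² θ)` of the complete elliptic integral of complementary
modulus `r`. -/
noncomputable def ellipticDelta (r θ : ℝ) : ℝ := √(r ^ 2 * cos θ ^ 2 + sin θ ^ 2)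

theorem ellipticDelta_radicand_pos {r : ℝ} (hr : 0 < r) (θ : ℝ) :
    0 < r ^ 2 * cos θ ^ 2 + sin θ ^ 2 := by
  rcases eq_or_ne (sin θ) 0 with h | h
  · have h1 : cos θ ^ 2 = 1 := by have := sin_sq_add_cos_sq θ; rw [h] at this; linarith
    rw [h1, h]; positivity
  · positivity

theorem ellipticDelta_pos {r : ℝ} (hr : 0 < r) (θ : ℝ) : 0 < ellipticDelta r θ :=
  sqrt_pos.2 (ellipticDelta_radicand_pos hr θ)

theorem ellipticDelta_sq (r θ : ℝ) :
    ellipticDelta r θ ^ 2 = r ^ 2 + (1 - r ^ 2) * sin θ ^ 2 := by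
  rw [ellipticDelta, sq_sqrt (by positivity), cos_sq']
  ring

theorem continuous_ellipticDelta (r : ℝ) : Continuous (ellipticDelta r) := by
  unfold ellipticDelta; fun_prop

theorem continuous_ellipticDelta_inv {r : ℝ} (hr : 0 < r) :
    Continuous fun θ => (ellipticDelta r θ)⁻¹ :=
  (continuous_ellipticDelta r).inv₀ fun θ => (ellipticDelta_pos hr θ).ne'

theorem hasDerivAt_ellipticDelta {r : ℝ} (hr : 0 < r) (θ : ℝ) :
    HasDerivAt (ellipticDelta r) ((1 - r ^ 2) * sin θ * cos θ / ellipticDelta r θ) θ := by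
  have h := ((((hasDerivAt_cos θ).fun_pow 2).const_mul (r ^ 2)).fun_add
    ((hasDerivAt_sin θ).fun_pow 2)).sqrt (ellipticDelta_radicand_pos hr θ).ne'
  refine h.congr_deriv ?_
  change _ / (2 * ellipticDelta r θ) = _
  have := (ellipticDelta_pos hr θ).ne'
  field_simp
  push_cast
  ring

theorem integral_ellipticDelta_inv_pos {r : ℝ} (hr : 0 < r) :
    0 < ∫ θ in (0 : ℝ)..(2 * π), (ellipticDelta r θ)⁻¹ :=
  intervalIntegral.intervalIntegral_pos_of_pos
    ((continuous_ellipticDelta_inv hr).intervalIntegrable _ _)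
    (fun θ => inv_pos.2 (ellipticDelta_pos hr θ)) two_pi_pos

theorem continuous_sin_sq_mul_ellipticDelta_inv {r : ℝ} (hr : 0 < r) :
    Continuous fun θ => sin θ ^ 2 * (ellipticDelta r θ)⁻¹ :=
  (continuous_sin.pow 2).mul (continuous_ellipticDelta_inv hr)

theorem integral_sin_sq_mul_ellipticDelta_inv {r : ℝ} (hr : 0 < r) :
    (1 - r ^ 2) * ∫ θ in (0 : ℝ)..(2 * π), sin θ ^ 2 * (ellipticDelta r θ)⁻¹
      = (∫ θ in (0 : ℝ)..(2 * π), ellipticDelta r θ)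
        - r ^ 2 * ∫ θ in (0 : ℝ)..(2 * π), (ellipticDelta r θ)⁻¹ := by
  rw [← intervalIntegral.integral_const_mul, ← intervalIntegral.integral_const_mul,
    ← intervalIntegral.integral_sub ((continuous_ellipticDelta r).intervalIntegrable _ _)
      (((continuous_ellipticDelta_inv hr).const_mul _).intervalIntegrable _ _)]
  congr 1
  funext θ
  have := (ellipticDelta_pos hr θ).ne'
  field_simp
  linear_combination -ellipticDelta_sq r θ

/-- The bound `k' K ≤ E` for complete elliptic integrals. -/
theorem mul_integral_ellipticDelta_inv_le {r : ℝ} (hr : 0 < r) :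
    r * ∫ θ in (0 : ℝ)..(2 * π), (ellipticDelta r θ)⁻¹
      ≤ ∫ θ in (0 : ℝ)..(2 * π), ellipticDelta r θ := by
  have hc := continuous_ellipticDelta r
  have hci := continuous_ellipticDelta_inv hr
  have ii : ∀ {F : ℝ → ℝ}, Continuous F → IntervalIntegrable F MeasureTheory.volume 0 (2 * π) :=
    fun hF => hF.intervalIntegrable _ _
  have h1 : ∫ θ in (0 : ℝ)..(2 * π),
      (r ^ 2 * (ellipticDelta r θ)⁻¹ ^ 3 - ellipticDelta r θ) = 0 := by
    rw [intervalIntegral.integral_eq_sub_of_hasDerivAt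
      (f := fun θ => (1 - r ^ 2) * (sin θ * cos θ) / ellipticDelta r θ)]
    · simp
    · intro θ _
      have hw := (ellipticDelta_pos hr θ).ne'
      refine ((((hasDerivAt_sin θ).fun_mul (hasDerivAt_cos θ)).const_mul (1 - r ^ 2)).fun_div
        (hasDerivAt_ellipticDelta hr θ) hw).congr_deriv ?_
      have e1 := ellipticDelta_sq r θ
      have e2 := cos_sq' θ
      field_simp
      have e4 : ellipticDelta r θ ^ 4 = (r ^ 2 + (1 - r ^ 2) * sin θ ^ 2) ^ 2 := by
        rw [← e1]; ring
      ring_nf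
      rw [e4, e1, e2]
      ring
    · exact ii (by fun_prop)
  have h2 : 0 ≤ ∫ θ in (0 : ℝ)..(2 * π),
      (ellipticDelta r θ - 2 * r * (ellipticDelta r θ)⁻¹
        + r ^ 2 * (ellipticDelta r θ)⁻¹ ^ 3) := by
    refine intervalIntegral.integral_nonneg two_pi_pos.le fun θ _ => ?_
    have hw := ellipticDelta_pos hr θ
    have : ellipticDelta r θ - 2 * r * (ellipticDelta r θ)⁻¹ + r ^ 2 * (ellipticDelta r θ)⁻¹ ^ 3
        = (ellipticDelta r θ)⁻¹ ^ 3 * (ellipticDelta r θ ^ 2 - r) ^ 2 := by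
      field_simp
      ring
    rw [this]
    positivity
  rw [intervalIntegral.integral_sub (ii (by fun_prop)) (ii hc)] at h1
  rw [intervalIntegral.integral_add (ii (by fun_prop)) (ii (by fun_prop)),
    intervalIntegral.integral_sub (ii hc) (ii (by fun_prop)),
    intervalIntegral.integral_const_mul (2 * r)] at h2
  linarith

theorem neg_log_le_integral_ellipticDelta_inv {r : ℝ} (hr : 0 < r) :
    -log r ≤ ∫ θ in (0 : ℝ)..(2 * π), (ellipticDelta r θ)⁻¹ := by
  have hpi := Real.pi_pos
  have hne : ∀ θ ∈ Set.uIcc (0 : ℝ) (2 * π), 0 < r + θ := by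
    intro θ hθ
    rw [Set.uIcc_of_le two_pi_pos.le] at hθ
    linarith [hθ.1]
  have hcont : ContinuousOn (fun θ : ℝ => (r + θ)⁻¹) (Set.uIcc 0 (2 * π)) :=
    ContinuousOn.inv₀ (by fun_prop) fun θ hθ => (hne θ hθ).ne'
  have h1 : ∫ θ in (0 : ℝ)..(2 * π), (r + θ)⁻¹ = log (r + 2 * π) - log r := by
    rw [intervalIntegral.integral_eq_sub_of_hasDerivAt (f := fun θ => log (r + θ))]
    · simp
    · intro θ hθ
      simpa using ((hasDerivAt_id' θ).const_add r).log (hne θ hθ).ne'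
    · exact hcont.intervalIntegrable
  have h2 : ∫ θ in (0 : ℝ)..(2 * π), (r + θ)⁻¹
      ≤ ∫ θ in (0 : ℝ)..(2 * π), (ellipticDelta r θ)⁻¹ := by
    refine intervalIntegral.integral_mono_on two_pi_pos.le hcont.intervalIntegrable
      ((continuous_ellipticDelta_inv hr).intervalIntegrable _ _) fun θ hθ => ?_
    refine inv_anti₀ (ellipticDelta_pos hr θ) ?_
    have hs : sin θ ^ 2 ≤ θ ^ 2 := sq_le_sq.2 abs_sin_le_abs
    rw [ellipticDelta]
    refine sqrt_le_iff.2 ⟨by linarith [hθ.1], ?_⟩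
    nlinarith [mul_nonneg hr.le hθ.1, mul_le_of_le_one_right (sq_nonneg r) (cos_sq_le_one θ)]
  have h3 : 0 ≤ log (r + 2 * π) := log_nonneg (by linarith [pi_gt_three])
  linarith

theorem integral_ellipticDelta_le {r : ℝ} (hr : 0 < r) (hr1 : r ≤ 1) :
    ∫ θ in (0 : ℝ)..(2 * π), ellipticDelta r θ ≤ 2 * π := by
  have h : ∫ θ in (0 : ℝ)..(2 * π), ellipticDelta r θ ≤ ∫ _ in (0 : ℝ)..(2 * π), (1 : ℝ) := by
    refine intervalIntegral.integral_mono_on two_pi_pos.le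
      ((continuous_ellipticDelta r).intervalIntegrable _ _) (by simp) fun θ _ => ?_
    rw [ellipticDelta]
    refine sqrt_le_one.2 ?_
    nlinarith [sin_sq_add_cos_sq θ, mul_le_of_le_one_left (sq_nonneg (cos θ))
      (pow_le_one₀ (n := 2) hr.le hr1)]
  simpa using h

/-- The complementary modulus for which the mean-value constraint is satisfied. -/
theorem exists_modulus {lam : ℝ} (hlam : 0 < lam) : ∃ r : ℝ, 0 < r ∧ r < 1 ∧
    lam * (1 - 2 * r ^ 2) * ∫ θ in (0 : ℝ)..(2 * π), (ellipticDelta r θ)⁻¹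
      = 2 * (1 - r ^ 2) * ∫ θ in (0 : ℝ)..(2 * π), sin θ ^ 2 * (ellipticDelta r θ)⁻¹ := by
  have hpi := Real.pi_pos
  have hc : Continuous fun p : ℝ × ℝ => (ellipticDelta (exp p.1) p.2)⁻¹ := by
    refine Continuous.inv₀ ?_ fun p => (ellipticDelta_pos (exp_pos p.1) p.2).ne'
    unfold ellipticDelta
    fun_prop
  set P : ℝ → ℝ := fun s => ∫ θ in (0 : ℝ)..(2 * π), (ellipticDelta (exp s) θ)⁻¹ with hP
  set Q : ℝ → ℝ := fun s => ∫ θ in (0 : ℝ)..(2 * π), sin θ ^ 2 * (ellipticDelta (exp s) θ)⁻¹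
    with hQ
  have hPc : Continuous P :=
    intervalIntegral.continuous_parametric_intervalIntegral_of_continuous'
      (f := fun s θ => (ellipticDelta (exp s) θ)⁻¹) hc _ _
  have hc' : Continuous fun p : ℝ × ℝ => sin p.2 ^ 2 * (ellipticDelta (exp p.1) p.2)⁻¹ := by
    fun_prop
  have hQc : Continuous Q :=
    intervalIntegral.continuous_parametric_intervalIntegral_of_continuous'
      (f := fun s θ => sin θ ^ 2 * (ellipticDelta (exp s) θ)⁻¹) hc' _ _
  set Φ : ℝ → ℝ := fun s => 2 * (1 - exp s ^ 2) * Q s - lam * (1 - 2 * exp s ^ 2) * P s with hΦ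
  have hΦc : Continuous Φ := by fun_prop
  have hΦ0 : 0 < Φ 0 := by
    have h := mul_pos hlam (integral_ellipticDelta_inv_pos (exp_pos 0))
    change 0 < lam * P 0 at h
    simp only [hΦ, exp_zero]
    linarith
  set N : ℝ := 8 * π / lam + 1 with hN
  have hN1 : 1 ≤ N := by rw [hN]; linarith [show 0 ≤ 8 * π / lam by positivity]
  have hΦN : Φ (-N) < 0 := by
    have hr := exp_pos (-N)
    have hr2 : exp (-N) ≤ 1 / 2 := by
      rw [exp_neg, one_div]
      exact inv_anti₀ two_pos (by linarith [add_one_le_exp N])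
    have hPN : N ≤ P (-N) := by simpa using neg_log_le_integral_ellipticDelta_inv hr
    have hQN : (1 - exp (-N) ^ 2) * Q (-N) ≤ 2 * π := by
      have h1 := integral_sin_sq_mul_ellipticDelta_inv hr
      have h2 := integral_ellipticDelta_le hr (by linarith)
      have h3 : 0 ≤ exp (-N) ^ 2 * P (-N) := by
        have : 0 ≤ P (-N) := by linarith
        positivity
      simp only [hQ, hP] at h3 ⊢
      linarith
    have h4 : lam * N = 8 * π + lam := by rw [hN]; field_simp
    have h5 : 1 / 2 ≤ 1 - 2 * exp (-N) ^ 2 := by nlinarith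
    have h6 : lam * (1 / 2) * N ≤ lam * (1 - 2 * exp (-N) ^ 2) * P (-N) := by gcongr
    simp only [hΦ]
    linarith
  obtain ⟨s, hs, hs0⟩ := intermediate_value_Icc (by linarith : -N ≤ 0) hΦc.continuousOn
    (show (0 : ℝ) ∈ Set.Icc (Φ (-N)) (Φ 0) from ⟨hΦN.le, hΦ0.le⟩)
  have hs1 : s ≠ 0 := by rintro rfl; linarith
  refine ⟨exp s, exp_pos s, exp_lt_one_iff.2 (lt_of_le_of_ne hs.2 hs1), ?_⟩
  simp only [hΦ] at hs0
  linarith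

/-- The analytic odd phase `ψ` with `ψ' = b √(r² cos² ψ + sin² ψ)`, where `b` is chosen so that `ψ`
winds once over a period. -/
theorem exists_elliptic_amplitude {r b : ℝ} (hr : 0 < r) (hb : 0 < b)
    (hP : ∫ θ in (0 : ℝ)..(2 * π), (ellipticDelta r θ)⁻¹ = 2 * π * b) :
    ∃ ψ : ℝ → ℝ, (∀ t, AnalyticAt ℝ ψ t) ∧ (∀ t, ψ (-t) = -ψ t) ∧
      (∀ t, ψ (t + 2 * π) = ψ t + 2 * π) ∧ StrictMono ψ ∧ Function.Surjective ψ ∧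
      ∀ t, HasDerivAt ψ (b * ellipticDelta r (ψ t)) t := by
  obtain ⟨ψ, h1, h2, h3, h4, h5, h6⟩ := exists_amplitude
    (f := fun θ => b⁻¹ * (ellipticDelta r θ)⁻¹)
    (fc := fun z => (b : ℂ)⁻¹ *
      ((r : ℂ) ^ 2 * Complex.cos z ^ 2 + Complex.sin z ^ 2) ^ ((-(1 / 2) : ℝ) : ℂ))
    ((continuous_ellipticDelta_inv hr).const_mul _)
    (fun θ => mul_pos (inv_pos.2 hb) (inv_pos.2 (ellipticDelta_pos hr θ)))
    (fun θ => by simp [ellipticDelta]) (fun θ => by simp [ellipticDelta])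
    (by rw [intervalIntegral.integral_const_mul, hP]; field_simp)
    (fun x => by
      have hbase : AnalyticAt ℂ
          (fun z => (r : ℂ) ^ 2 * Complex.cos z ^ 2 + Complex.sin z ^ 2) x :=
        (analyticAt_const.mul (Complex.analyticAt_cos.pow 2)).add (Complex.analyticAt_sin.pow 2)
      refine analyticAt_const.mul (hbase.cpow analyticAt_const ?_)
      rw [← Complex.ofReal_cos, ← Complex.ofReal_sin]
      exact_mod_cast Complex.ofReal_mem_slitPlane.2 (ellipticDelta_radicand_pos hr x))
    (fun t => by
      have hrad := (ellipticDelta_radicand_pos hr t).le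
      have h : ((r : ℂ) ^ 2 * Complex.cos t ^ 2 + Complex.sin t ^ 2) ^ ((-(1 / 2) : ℝ) : ℂ)
          = (((ellipticDelta r t)⁻¹ : ℝ) : ℂ) := by
        rw [ellipticDelta, sqrt_eq_rpow, ← rpow_neg hrad, Complex.ofReal_cpow hrad]
        push_cast
        rfl
      rw [h, ← Complex.ofReal_inv, ← Complex.ofReal_mul, Complex.ofReal_re])
  refine ⟨ψ, h1, h2, h3, h4, h5, fun t => (h6 t).congr_deriv ?_⟩
  rw [mul_inv, inv_inv, inv_inv]

/-- A monotone phase winding once over `2π` has a sine of minimal period `2π`. -/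
theorem two_pi_le_of_periodic_sin_comp {ψ : ℝ → ℝ} (hmono : StrictMono ψ)
    (hsurj : Function.Surjective ψ) (hwind : ∀ t, ψ (t + 2 * π) = ψ t + 2 * π) {p : ℝ}
    (hp : 0 < p) (hper : Function.Periodic (fun t => sin (ψ t)) p) : 2 * π ≤ p := by
  by_contra! hlt
  obtain ⟨t, ht⟩ := hsurj (π / 2)
  have h1 : ψ t < ψ (t + p) := hmono (by linarith)
  have h2 : ψ (t + p) < ψ t + 2 * π := by
    rw [← hwind]; exact hmono (by linarith)
  have h3 : cos (ψ (t + p) - ψ t) = 1 := by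
    have h := hper t
    simp only [ht, sin_pi_div_two] at h
    rw [ht, cos_sub_pi_div_two, h]
  have h4 := (cos_eq_one_iff_of_lt_of_lt (by linarith [two_pi_pos]) (by linarith)).1 h3
  linarith

theorem modulus_energy_ineq {lam r : ℝ} (hr : 0 < r) (hr1 : r < 1) (hm : 0 < 1 - 2 * r ^ 2)
    (hlow : 2 * (r * (1 - r)) ≤ lam * (1 - 2 * r ^ 2)) :
    4 * ((1 - r ^ 2) * r ^ 2)
      < lam ^ 2 * (1 - 2 * r ^ 2) ^ 2 + 8 * ((1 - r ^ 2) * r ^ 2) * lam := by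
  have h0 : 0 < r * (1 - r) := mul_pos hr (by linarith)
  have hlam : 0 < lam := pos_of_mul_pos_left (by linarith) hm.le
  have h1 : 2 * (r * (1 - r)) ≤ lam := hlow.trans (by nlinarith [mul_pos hlam (pow_pos hr 2)])
  have h2 : (2 * (r * (1 - r))) ^ 2 ≤ (lam * (1 - 2 * r ^ 2)) ^ 2 := by gcongr
  have h3 : 0 < (1 - r ^ 2) * r ^ 2 := mul_pos (by nlinarith) (by positivity)
  have h4 : 8 * ((1 - r ^ 2) * r ^ 2) * (2 * (r * (1 - r))) ≤ 8 * ((1 - r ^ 2) * r ^ 2) * lam := by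
    gcongr
  have h5 : 0 < r ^ 2 * (r * (1 - r)) * (1 - 2 * r ^ 2) := by positivity
  nlinarith

theorem stmt_11 (lam : ℝ) (hlam : 0 < lam) :
    ∃ g : ℝ → ℝ,
      (∀ t : ℝ, AnalyticAt ℝ g t) ∧
      (∀ t : ℝ, g (-t) = -g t) ∧
      Function.Periodic g (2 * π) ∧
      (∀ p : ℝ, 0 < p → Function.Periodic g p → 2 * π ≤ p) ∧
      g ≠ 0 ∧
      (∀ t : ℝ, deriv (deriv g) t - avg (fun s => g s ^ 2) * g t + lam * g t ^ 3 = 0) ∧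
      (∀ h : ℝ → ℝ, ContDiff ℝ 2 h → (∀ t : ℝ, h (-t) = -h t) →
        Function.Periodic h (2 * π) →
        (∀ t : ℝ, deriv (deriv h) t - (avg (fun s => g s ^ 2) - 3 * lam * g t ^ 2) * h t
            = 2 * avg (fun s => g s * h s) * g t) →
        h = 0) := by
  have hpi := Real.pi_pos
  obtain ⟨r, hr, hr1, hPQ⟩ := exists_modulus hlam
  set P := ∫ θ in (0 : ℝ)..(2 * π), (ellipticDelta r θ)⁻¹ with hP
  set Q := ∫ θ in (0 : ℝ)..(2 * π), sin θ ^ 2 * (ellipticDelta r θ)⁻¹ with hQ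
  have hP0 : 0 < P := integral_ellipticDelta_inv_pos hr
  have hQlow : r * (1 - r) * P ≤ (1 - r ^ 2) * Q := by
    have h1 := integral_sin_sq_mul_ellipticDelta_inv hr
    have h2 := mul_integral_ellipticDelta_inv_le hr
    linarith
  have hm : 0 < 1 - r ^ 2 := by nlinarith
  have hlow : 2 * (r * (1 - r)) ≤ lam * (1 - 2 * r ^ 2) :=
    le_of_mul_le_mul_right (by linarith) hP0
  have hm2 : 0 < 1 - 2 * r ^ 2 :=
    pos_of_mul_pos_right (lt_of_lt_of_le (by nlinarith) hlow) hlam.le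
  obtain ⟨b, hbdef⟩ : ∃ b, b = P / (2 * π) := ⟨_, rfl⟩
  have hb : 0 < b := by rw [hbdef]; positivity
  have hPb : P = 2 * π * b := by rw [hbdef]; field_simp
  obtain ⟨A, hA, hA2⟩ : ∃ A : ℝ, 0 < A ∧ lam * A ^ 2 = 2 * (1 - r ^ 2) * b ^ 2 := by
    have h : 0 < 2 * (1 - r ^ 2) * b ^ 2 / lam := by positivity
    refine ⟨√(2 * (1 - r ^ 2) * b ^ 2 / lam), sqrt_pos.2 h, ?_⟩
    rw [sq_sqrt h.le]
    field_simp
  obtain ⟨ψ, hψa, hψodd, hψwind, hψmono, hψsurj, hψd⟩ := exists_elliptic_amplitude hr hb hPb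
  have hψ0 : ψ 0 = 0 := by have := hψodd 0; rw [neg_zero] at this; linarith
  have hψT : ψ (2 * π) = 2 * π := by simpa [hψ0] using hψwind 0
  have hψc : Continuous ψ := continuous_iff_continuousAt.2 fun t => (hψd t).continuousAt
  set a := b ^ 2 * (1 - 2 * r ^ 2) with ha
  set g : ℝ → ℝ := fun t => A * sin (ψ t) with hg
  set g' : ℝ → ℝ := fun t => A * b * (cos (ψ t) * ellipticDelta r (ψ t)) with hg'
  have hgd : ∀ t, HasDerivAt g (g' t) t := fun t =>
    ((hψd t).sin.const_mul A).congr_deriv (by simp only [hg']; ring)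
  have hgd' : ∀ t, HasDerivAt g' (a * g t - lam * g t ^ 3) t := by
    intro t
    refine (((hψd t).cos.fun_mul
      ((hasDerivAt_ellipticDelta hr (ψ t)).comp t (hψd t))).const_mul (A * b)).congr_deriv ?_
    have hw := (ellipticDelta_pos hr (ψ t)).ne'
    have e1 := ellipticDelta_sq r (ψ t)
    have e2 := cos_sq' (ψ t)
    simp only [hg, ha, Function.comp_apply]
    field_simp
    linear_combination (-(b ^ 2 * sin (ψ t))) * e1
      + (b ^ 2 * (1 - r ^ 2) * sin (ψ t)) * e2 + sin (ψ t) ^ 3 * hA2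
  have hg0' : g' 0 ^ 2 = A ^ 2 * b ^ 2 * r ^ 2 := by
    have e1 := ellipticDelta_sq r 0
    simp only [hg', hψ0, cos_zero]
    rw [sin_zero] at e1
    linear_combination A ^ 2 * b ^ 2 * e1
  have hE : ∀ t, g' t ^ 2 = g' 0 ^ 2 + a * g t ^ 2 - lam / 2 * g t ^ 4 := by
    intro t
    rw [hg0']
    simp only [hg', hg, ha]
    rw [mul_pow, mul_pow, mul_pow, ellipticDelta_sq, cos_sq']
    linear_combination A ^ 2 * sin (ψ t) ^ 4 / 2 * hA2
  have hper : Function.Periodic g (2 * π) := fun t => by simp [hg, hψwind]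
  have havg : avg (fun s => g s ^ 2) = a := by
    have h1 : ∫ t in (0 : ℝ)..(2 * π), b * sin (ψ t) ^ 2 = Q := by
      have h := intervalIntegral.integral_comp_mul_deriv (a := 0) (b := 2 * π) (f := ψ)
        (f' := fun t => b * ellipticDelta r (ψ t))
        (g := fun θ => sin θ ^ 2 * (ellipticDelta r θ)⁻¹) (fun t _ => hψd t)
        (((continuous_ellipticDelta r).comp hψc).const_mul b).continuousOn
        (continuous_sin_sq_mul_ellipticDelta_inv hr)
      rw [hψ0, hψT] at h
      rw [hQ, ← h]
      congr 1
      funext t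
      have hw := (ellipticDelta_pos hr (ψ t)).ne'
      simp only [Function.comp_apply]
      field_simp
    rw [intervalIntegral.integral_const_mul] at h1
    simp only [avg, hg, mul_pow]
    rw [intervalIntegral.integral_const_mul, ha]
    set S := ∫ t in (0 : ℝ)..(2 * π), sin (ψ t) ^ 2
    have h2 : lam * A ^ 2 * S = lam * (b ^ 2 * (1 - 2 * r ^ 2)) * (2 * π) := by
      apply mul_left_cancel₀ hb.ne'
      rw [← h1, hPb] at hPQ
      linear_combination b * S * hA2 - b ^ 2 * hPQ
    field_simp
    apply mul_left_cancel₀ hlam.ne'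
    linear_combination h2
  have hcond : lam * (4 * g' 0 ^ 2 + a ^ 2) ≠ 2 * g' 0 ^ 2 := by
    intro h
    have hineq := modulus_energy_ineq hr hr1 hm2 hlow
    rw [hg0', ha] at h
    have h1 : b ^ 4 * (lam ^ 2 * (1 - 2 * r ^ 2) ^ 2 + 8 * ((1 - r ^ 2) * r ^ 2) * lam)
        = b ^ 4 * (4 * ((1 - r ^ 2) * r ^ 2)) := by
      linear_combination lam * h + (2 * b ^ 2 * r ^ 2 - 4 * lam * b ^ 2 * r ^ 2) * hA2
    exact hineq.ne' (mul_left_cancel₀ (by positivity) h1)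
  refine ⟨g, fun t => ?_, fun t => ?_, hper, fun p hp hgp => ?_, fun h => ?_, fun t => ?_,
    fun h hh hodd hhper heq => ?_⟩
  · exact analyticAt_const.mul (analyticAt_sin.comp (hψa t))
  · simp [hg, hψodd]
  · exact two_pi_le_of_periodic_sin_comp hψmono hψsurj hψwind hp fun t =>
      mul_left_cancel₀ hA.ne' (hgp t)
  · obtain ⟨t, ht⟩ := hψsurj (π / 2)
    have h1 := congrFun h t
    simp [hg, ht, hA.ne'] at h1
  · rw [show deriv g = g' from funext fun t => (hgd t).deriv, (hgd' t).deriv, havg]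
    ring
  · have hh0 : h 0 = 0 := by have := hodd 0; rw [neg_zero] at this; linarith
    rw [havg] at heq
    exact eq_zero_of_linearized hlam.ne' hgd hgd' hE hper (by simp [hg, hψ0])
      (fun h0 => by rw [h0] at hg0'; simp [hA.ne', hb.ne', hr.ne'] at hg0')
      havg hcond hh hh0 hhper heq
end

section
/- For every λ ∈ (0, 1) there exists a function g : ℝ → ℝ which is real-analytic, odd, 2π-periodic with minimal period 2π, not identically zero, and satisfies g''(t) + ⟨g²⟩ g(t) − λ g(t)³ = 0 for all t ∈ ℝ; moreover g is non-degenerate in the space of odd 2π-periodic functions: every C², odd, 2π-periodic function h : ℝ → ℝ satisfying h''(t) + (⟨g²⟩ − 3λ g(t)²) h(t) = −2⟨g h⟩ g(t) for all t is identically zero. -/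
open Real

/-- A function whose derivative vanishes identically equals its value at `0`. -/
lemma eq_apply_zero_of_hasDerivAt_zero {f : ℝ → ℝ} (hf : ∀ t, HasDerivAt f 0 t) (t : ℝ) :
    f t = f 0 :=
  is_const_of_deriv_eq_zero (fun s => (hf s).differentiableAt) (fun s => (hf s).deriv) t 0

/-- Two solutions of `y'' + q y = 0` have constant Wronskian. -/
lemma wronskian_eq {q x x₁ y y₁ : ℝ → ℝ}
    (hx : ∀ t, HasDerivAt x (x₁ t) t) (hx₁ : ∀ t, HasDerivAt x₁ (-(q t * x t)) t)
    (hy : ∀ t, HasDerivAt y (y₁ t) t) (hy₁ : ∀ t, HasDerivAt y₁ (-(q t * y t)) t) (t : ℝ) :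
    x t * y₁ t - x₁ t * y t = x 0 * y₁ 0 - x₁ 0 * y 0 := by
  refine eq_apply_zero_of_hasDerivAt_zero (f := fun t => x t * y₁ t - x₁ t * y t) (fun s => ?_) t
  exact (((hx s).mul (hy₁ s)).sub ((hx₁ s).mul (hy s))).congr_deriv (by ring)

/-- A solution of `x'' + q x = 0` with zero initial data vanishes, given a pair of solutions
with nonzero Wronskian. -/
lemma eq_zero_of_wronskian_ne_zero {q x x₁ y y₁ z z₁ : ℝ → ℝ}
    (hx : ∀ t, HasDerivAt x (x₁ t) t) (hx₁ : ∀ t, HasDerivAt x₁ (-(q t * x t)) t)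
    (hy : ∀ t, HasDerivAt y (y₁ t) t) (hy₁ : ∀ t, HasDerivAt y₁ (-(q t * y t)) t)
    (hz : ∀ t, HasDerivAt z (z₁ t) t) (hz₁ : ∀ t, HasDerivAt z₁ (-(q t * z t)) t)
    (hyz : y 0 * z₁ 0 - y₁ 0 * z 0 ≠ 0) (hx0 : x 0 = 0) (hx₁0 : x₁ 0 = 0) (t : ℝ) :
    x t = 0 := by
  have hxy := wronskian_eq hx hx₁ hy hy₁ t
  have hxz := wronskian_eq hx hx₁ hz hz₁ t
  have hyz' := wronskian_eq hy hy₁ hz hz₁ t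
  rw [hx0, hx₁0] at hxy hxz
  rw [← hyz'] at hyz
  refine (mul_eq_zero.mp ?_).resolve_right hyz
  linear_combination y t * hxz - z t * hxy

/-- Conservation of energy for the Duffing equation `g'' = -a g + lam g³`. -/
lemma duffing_energy {g g₁ : ℝ → ℝ} {a lam : ℝ} (hg : ∀ t, HasDerivAt g (g₁ t) t)
    (hg₁ : ∀ t, HasDerivAt g₁ (-a * g t + lam * g t ^ 3) t) (h0 : g 0 = 0) (t : ℝ) :
    g₁ t ^ 2 = g₁ 0 ^ 2 - a * g t ^ 2 + lam / 2 * g t ^ 4 := by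
  have := eq_apply_zero_of_hasDerivAt_zero
    (f := fun t => g₁ t ^ 2 + a * g t ^ 2 - lam / 2 * g t ^ 4) (fun s => by
      refine ((((hg₁ s).pow 2).add (((hg s).pow 2).const_mul a)).sub
        (((hg s).pow 4).const_mul (lam / 2))).congr_deriv ?_
      push_cast
      ring) t
  simp only [h0] at this
  linear_combination this

/-- Non-degeneracy of odd periodic solutions of `g'' + ⟨g²⟩ g - lam g³ = 0` lying strictly inside
the separatrix. -/
lemma duffing_nondegenerate {g g₁ : ℝ → ℝ} {a lam : ℝ} (hlam : lam ∈ Set.Ioo (0 : ℝ) 1)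
    (hg : ∀ t, HasDerivAt g (g₁ t) t)
    (hg₁ : ∀ t, HasDerivAt g₁ (-a * g t + lam * g t ^ 3) t)
    (h0 : g 0 = 0) (hper : g (2 * π) = 0) (ha : avg (fun s => g s ^ 2) = a)
    (hg₁0 : g₁ 0 ≠ 0) (hsep : 2 * lam * g₁ 0 ^ 2 < a ^ 2)
    {h : ℝ → ℝ} (hh : ContDiff ℝ 2 h) (hh0 : h 0 = 0) (hhper : h (2 * π) = 0)
    (heq : ∀ t, deriv (deriv h) t + (a - 3 * lam * g t ^ 2) * h t
      = -(2 * avg (fun s => g s * h s)) * g t) :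
    h = 0 := by
  obtain ⟨hl0, hl1⟩ := hlam
  have hpi : (0 : ℝ) < 2 * π := by positivity
  have hlne : lam ≠ 0 := hl0.ne'
  set E := g₁ 0 ^ 2 with hE
  have hEpos : 0 < E := by positivity
  have hane : a ≠ 0 := by
    rintro rfl
    nlinarith [mul_pos hl0 hEpos]
  set c := -(2 * avg (fun s => g s * h s)) with hc
  have energy := duffing_energy hg hg₁ h0
  rw [← hE] at energy
  have hgc : Continuous g := continuous_iff_continuousAt.2 fun t => (hg t).continuousAt
  -- the mean-free primitive of `g²`
  set P : ℝ → ℝ := fun t => (∫ s in (0 : ℝ)..t, g s ^ 2) - a * t with hP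
  have hPd : ∀ t, HasDerivAt P (g t ^ 2 - a) t := fun t => by
    have h1 : HasDerivAt (fun t => ∫ s in (0 : ℝ)..t, g s ^ 2) (g t ^ 2) t :=
      intervalIntegral.integral_hasDerivAt_right ((hgc.pow 2).intervalIntegrable _ _)
        (hgc.pow 2).stronglyMeasurable.stronglyMeasurableAtFilter (hgc.pow 2).continuousAt
    exact (h1.sub ((hasDerivAt_id t).const_mul a)).congr_deriv (by ring)
  have hP0 : P 0 = 0 := by simp [hP]
  have hPper : P (2 * π) = 0 := by
    simp only [hP, ← ha, avg]
    field_simp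
    ring
  set k := 2 * a / lam - a with hk
  have hklam : lam * k = 2 * a - a * lam := by rw [hk]; field_simp
  -- an odd periodic solution `W` and an odd secular solution `U` of
  -- `L y = const * g`, where `L y = y'' + (a - 3 lam g²) y`
  set W : ℝ → ℝ := fun t => P t * g₁ t - g t ^ 3 + k * g t with hW
  set W₁ : ℝ → ℝ := fun t => (g t ^ 2 - a) * g₁ t + P t * (-a * g t + lam * g t ^ 3)
    - 3 * g t ^ 2 * g₁ t + k * g₁ t with hW₁
  set U : ℝ → ℝ := fun t => g t + t * g₁ t with hU
  set U₁ : ℝ → ℝ := fun t => 2 * g₁ t + t * (-a * g t + lam * g t ^ 3) with hU₁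
  set q : ℝ → ℝ := fun t => a - 3 * lam * g t ^ 2 with hq
  have hWd : ∀ t, HasDerivAt W (W₁ t) t := fun t => by
    refine ((((hPd t).mul (hg₁ t)).sub ((hg t).pow 3)).add ((hg t).const_mul k)).congr_deriv ?_
    simp only [hW₁]; push_cast; ring
  have hW₁d : ∀ t, HasDerivAt W₁ ((2 * a ^ 2 - 4 * E) * g t - q t * W t) t := fun t => by
    refine (((((((hg t).pow 2).sub_const a).mul (hg₁ t)).add ((hPd t).mul
      (((hg t).const_mul (-a)).add (((hg t).pow 3).const_mul lam)))).sub
      ((((hg t).pow 2).const_mul 3).mul (hg₁ t))).add ((hg₁ t).const_mul k)).congr_deriv ?_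
    simp only [hq, hW, Pi.add_apply, Pi.pow_apply]
    push_cast
    linear_combination (-4 * g t) * energy t - 2 * g t ^ 3 * hklam
  have hUd : ∀ t, HasDerivAt U (U₁ t) t := fun t => by
    refine ((hg t).add ((hasDerivAt_id t).mul (hg₁ t))).congr_deriv ?_
    simp only [hU₁, id]; ring
  have hU₁d : ∀ t, HasDerivAt U₁ (-2 * a * g t - q t * U t) t := fun t => by
    refine (((hg₁ t).const_mul 2).add ((hasDerivAt_id t).mul
      (((hg t).const_mul (-a)).add (((hg t).pow 3).const_mul lam)))).congr_deriv ?_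
    simp only [hq, hU, id, Pi.add_apply, Pi.pow_apply]; push_cast; ring
  have hhd : ∀ t, HasDerivAt h (deriv h t) t := fun t =>
    (hh.differentiable (by norm_num)).differentiableAt.hasDerivAt
  have hh₁d : ∀ t, HasDerivAt (deriv h) (c * g t - q t * h t) t := fun t => by
    have : Differentiable ℝ (deriv h) :=
      (contDiff_succ_iff_deriv.1 (show ContDiff ℝ (1 + 1) h by
        rwa [one_add_one_eq_two])).2.2.differentiable (by norm_num)
    refine (this t).hasDerivAt.congr_deriv ?_
    have := heq t
    simp only [hq]
    linear_combination this
  -- an odd element of the kernel of `L`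
  set v : ℝ → ℝ := fun t => a * W t + (a ^ 2 - 2 * E) * U t with hv
  set v₁ : ℝ → ℝ := fun t => a * W₁ t + (a ^ 2 - 2 * E) * U₁ t with hv₁
  have hvd : ∀ t, HasDerivAt v (v₁ t) t := fun t =>
    ((hWd t).const_mul a).add ((hUd t).const_mul _)
  have hv₁d : ∀ t, HasDerivAt v₁ (-(q t * v t)) t := fun t =>
    (((hW₁d t).const_mul a).add ((hU₁d t).const_mul _)).congr_deriv (by simp only [hv]; ring)
  have hg₁d : ∀ t, HasDerivAt (fun t => -a * g t + lam * g t ^ 3) (-(q t * g₁ t)) t := fun t => by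
    refine (((hg t).const_mul (-a)).add (((hg t).pow 3).const_mul lam)).congr_deriv ?_
    simp only [hq]; push_cast; ring
  have hv0 : v 0 = 0 := by simp [hv, hW, hU, hP0, h0]
  have hv₁0 : lam * v₁ 0 = g₁ 0 * (2 * (a ^ 2 - 2 * lam * E)) := by
    simp only [hv₁, hW₁, hU₁, hP0, h0]
    linear_combination a * g₁ 0 * hklam
  have hv₁ne : v₁ 0 ≠ 0 := by
    intro h'
    rw [h', mul_zero] at hv₁0
    exact mul_ne_zero hg₁0 (mul_pos two_pos (sub_pos.2 hsep)).ne' hv₁0.symm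
  set δ := (deriv h 0 + c / (2 * a) * U₁ 0) / v₁ 0 with hδ
  have hrep : ∀ t, h t + c / (2 * a) * U t - δ * v t = 0 := by
    refine eq_zero_of_wronskian_ne_zero (q := q)
      (x₁ := fun t => deriv h t + c / (2 * a) * U₁ t - δ * v₁ t) (fun t => ?_) (fun t => ?_)
      hg₁ hg₁d hvd hv₁d ?_ ?_ ?_
    · exact ((hhd t).add ((hUd t).const_mul _)).sub ((hvd t).const_mul _)
    · refine (((hh₁d t).add ((hU₁d t).const_mul _)).sub ((hv₁d t).const_mul _)).congr_deriv ?_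
      field_simp
      ring
    · rw [hv0, mul_zero, sub_zero]
      exact mul_ne_zero hg₁0 hv₁ne
    · simp [hh0, hv0, hU, h0]
    · simp only [hδ]
      field_simp
      ring
  have hγ : δ * (a ^ 2 - 2 * E) - c / (2 * a) = 0 := by
    have h2 := hrep (2 * π)
    have hne : g₁ (2 * π) ≠ 0 := by
      intro h'
      have := energy (2 * π)
      rw [h', hper] at this
      norm_num at this
      exact hEpos.ne' this.symm
    simp only [hv, hW, hU, hPper, hper, hhper] at h2
    refine (mul_eq_zero.mp ?_).resolve_right (mul_ne_zero hpi.ne' hne)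
    linear_combination -h2
  set β := δ * a with hβ
  have hhW : ∀ t, h t = β * W t := fun t => by
    have := hrep t
    simp only [hv] at this
    linear_combination this + U t * hγ
  have hcβ : c = β * (2 * a ^ 2 - 4 * E) := by
    field_simp at hγ
    linear_combination -hγ
  have hgW : ∫ t in (0 : ℝ)..(2 * π), g t * W t = 2 * π * (E / lam - a ^ 2 / 2) := by
    have hΦ : ∀ t, HasDerivAt (fun t => 1 / 2 * (P t * g t ^ 2)
        - 1 / lam * (g t * g₁ t - E * t + 2 * a * (P t + a * t))
        + (a / 2 + k) * (P t + a * t)) (g t * W t) t := fun t => by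
      have hPa := (hPd t).add ((hasDerivAt_id t).const_mul a)
      refine (((((hPd t).mul ((hg t).pow 2)).const_mul (1 / 2)).sub
        (((((hg t).mul (hg₁ t)).sub ((hasDerivAt_id t).const_mul E)).add
          (hPa.const_mul (2 * a))).const_mul (1 / lam))).add
        (hPa.const_mul (a / 2 + k))).congr_deriv ?_
      have := energy t
      simp only [hW, Pi.pow_apply]
      push_cast
      field_simp
      linear_combination (-2) * this
    have hWc : Continuous W := continuous_iff_continuousAt.2 fun t => (hWd t).continuousAt
    rw [intervalIntegral.integral_eq_sub_of_hasDerivAt (fun t _ => hΦ t)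
      ((hgc.mul hWc).intervalIntegrable _ _)]
    simp only [hPper, hP0, hper, h0, hk]
    field_simp
    ring
  have hcβ' : c = -(2 * (β * (E / lam - a ^ 2 / 2))) := by
    have : (fun s => g s * h s) = fun s => β * (g s * W s) := by
      funext s; rw [hhW s]; ring
    rw [hc, this, avg, intervalIntegral.integral_const_mul, hgW]
    field_simp
  have hβ0 : β = 0 := by
    have hprod : β * (a ^ 2 * lam - 4 * E * lam + 2 * E) = 0 := by
      have := hcβ.symm.trans hcβ'
      field_simp at this
      linear_combination this
    refine (mul_eq_zero.mp hprod).resolve_right ?_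
    have : 0 < lam * (a ^ 2 - 2 * lam * E) := mul_pos hl0 (by linarith)
    nlinarith [mul_nonneg hEpos.le (sq_nonneg (1 - lam))]
  funext t
  rw [hhW t, hβ0, zero_mul, Pi.zero_apply]

/-- A real primitive of the restriction of a holomorphic function is real-analytic. -/
lemma analyticAt_of_hasDerivAt_of_holomorphic {F f : ℝ → ℝ} {fC : ℂ → ℂ} {x : ℝ}
    (hF : ∀ y, HasDerivAt F (f y) y) (hfC : ∀ᶠ z in nhds (x : ℂ), DifferentiableAt ℂ fC z)
    (hf : ∀ y : ℝ, fC y = f y) : AnalyticAt ℝ F x := by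
  obtain ⟨r, hr, hball⟩ := Metric.eventually_nhds_iff_ball.1 hfC
  obtain ⟨G, hG⟩ := DifferentiableOn.isExactOn_ball (c := (x : ℂ)) (r := r)
    fun z hz => (hball z hz).differentiableWithinAt
  have hGan : AnalyticAt ℂ G x :=
    DifferentiableOn.analyticAt (s := Metric.ball (x : ℂ) r)
      (fun z hz => (hG z hz).differentiableAt.differentiableWithinAt) (Metric.ball_mem_nhds _ hr)
  have hGd : ∀ y ∈ Metric.ball x r, HasDerivAt (fun y : ℝ => (G y).re) (f y) y := fun y hy => by
    have hy' : (y : ℂ) ∈ Metric.ball (x : ℂ) r := by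
      rw [Metric.mem_ball, Complex.dist_eq, ← Complex.ofReal_sub, Complex.norm_real]
      exact hy
    simpa [hf y] using (hG y hy').real_of_complex
  have hre : AnalyticAt ℝ (fun y : ℝ => (G y).re + (F x - (G x).re)) x :=
    hGan.re_ofReal.add analyticAt_const
  refine hre.congr ?_
  filter_upwards [Metric.ball_mem_nhds x hr] with y hy
  refine Metric.isOpen_ball.eqOn_of_deriv_eq (convex_ball x r).isPreconnected
    (f := fun y : ℝ => (G y).re + (F x - (G x).re)) (g := F) (x := x)
    (fun z hz => ((hGd z hz).add_const _).differentiableAt.differentiableWithinAt)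
    (fun z _ => (hF z).differentiableAt.differentiableWithinAt)
    (fun z hz => by rw [((hGd z hz).add_const _).deriv, (hF z).deriv])
    (Metric.mem_ball_self hr) (by ring) hy

lemma one_sub_mul_sin_sq_pos {m : ℝ} (hm1 : m < 1) (θ : ℝ) : 0 < 1 - m * sin θ ^ 2 := by
  rcases le_or_gt m 0 with hm | hm
  · nlinarith [sq_nonneg (sin θ)]
  · nlinarith [sin_sq_le_one θ]

lemma sqrt_one_sub_mul_sin_sq_le_one {m : ℝ} (hm0 : 0 ≤ m) (θ : ℝ) :
    √(1 - m * sin θ ^ 2) ≤ 1 :=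
  sqrt_le_iff.2 ⟨zero_le_one, by nlinarith [mul_nonneg hm0 (sq_nonneg (sin θ))]⟩

/-- The incomplete elliptic integral of the first kind with parameter `m`. -/
noncomputable def ellipticF (m θ : ℝ) : ℝ := ∫ x in (0 : ℝ)..θ, 1 / √(1 - m * sin x ^ 2)

lemma ellipticF_zero (m : ℝ) : ellipticF m 0 = 0 := by simp [ellipticF]

lemma continuous_ellipticF_integrand {m : ℝ} (hm1 : m < 1) :
    Continuous fun x => 1 / √(1 - m * sin x ^ 2) :=
  continuous_const.div (by fun_prop) fun x => (sqrt_pos.2 (one_sub_mul_sin_sq_pos hm1 x)).ne'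

lemma hasDerivAt_ellipticF {m : ℝ} (hm1 : m < 1) (θ : ℝ) :
    HasDerivAt (ellipticF m) (1 / √(1 - m * sin θ ^ 2)) θ :=
  intervalIntegral.integral_hasDerivAt_right
    ((continuous_ellipticF_integrand hm1).intervalIntegrable _ _)
    (continuous_ellipticF_integrand hm1).stronglyMeasurable.stronglyMeasurableAtFilter
    (continuous_ellipticF_integrand hm1).continuousAt

lemma analyticAt_ellipticF {m : ℝ} (hm1 : m < 1) (θ : ℝ) : AnalyticAt ℝ (ellipticF m) θ := by
  refine analyticAt_of_hasDerivAt_of_holomorphic (hasDerivAt_ellipticF hm1)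
    (fC := fun z => 1 / (1 - m * Complex.sin z ^ 2) ^ ((1 / 2 : ℝ) : ℂ)) ?_ fun y => ?_
  · have hc : Continuous fun z : ℂ => 1 - m * Complex.sin z ^ 2 := by fun_prop
    have hmem : (1 - m * Complex.sin θ ^ 2 : ℂ) ∈ Complex.slitPlane := by
      rw [← Complex.ofReal_sin]
      exact_mod_cast Complex.ofReal_mem_slitPlane.2 (one_sub_mul_sin_sq_pos hm1 θ)
    filter_upwards [hc.continuousAt.preimage_mem_nhds
      (Complex.isOpen_slitPlane.mem_nhds hmem)] with z hz
    have hz' : (1 - m * Complex.sin z ^ 2 : ℂ) ∈ Complex.slitPlane := hz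
    refine (differentiableAt_const _).div (DifferentiableAt.cpow (by fun_prop)
      (differentiableAt_const _) hz') ?_
    rw [Complex.cpow_def_of_ne_zero (Complex.slitPlane_ne_zero hz')]
    exact Complex.exp_ne_zero _
  · rw [sqrt_eq_rpow]
    push_cast [Complex.ofReal_cpow (one_sub_mul_sin_sq_pos hm1 y).le]
    rfl

lemma ellipticF_neg {m : ℝ} (hm1 : m < 1) (θ : ℝ) : ellipticF m (-θ) = -ellipticF m θ := by
  have := eq_apply_zero_of_hasDerivAt_zero (f := fun θ => ellipticF m (-θ) + ellipticF m θ)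
    (fun s => by
      refine (((hasDerivAt_ellipticF hm1 (-s)).scomp s (hasDerivAt_neg s)).add
        (hasDerivAt_ellipticF hm1 s)).congr_deriv ?_
      simp) θ
  simp only [neg_zero, ellipticF_zero] at this
  linarith

lemma ellipticF_add_pi {m : ℝ} (hm1 : m < 1) (θ : ℝ) :
    ellipticF m (θ + π) = ellipticF m θ + ellipticF m π := by
  have := eq_apply_zero_of_hasDerivAt_zero (f := fun θ => ellipticF m (θ + π) - ellipticF m θ)
    (fun s => by
      refine (((hasDerivAt_ellipticF hm1 (s + π)).comp_add_const s π).sub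
        (hasDerivAt_ellipticF hm1 s)).congr_deriv ?_
      simp) θ
  simp only [zero_add, ellipticF_zero] at this
  linarith

lemma strictMono_ellipticF {m : ℝ} (hm1 : m < 1) : StrictMono (ellipticF m) :=
  strictMono_of_deriv_pos fun θ => by
    rw [(hasDerivAt_ellipticF hm1 θ).deriv]
    exact one_div_pos.2 (sqrt_pos.2 (one_sub_mul_sin_sq_pos hm1 θ))

lemma le_ellipticF {m : ℝ} (hm0 : 0 ≤ m) (hm1 : m < 1) {θ : ℝ} (hθ : 0 ≤ θ) :
    θ ≤ ellipticF m θ := by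
  have hmono : Monotone fun θ => ellipticF m θ - θ := by
    have hd : ∀ θ, HasDerivAt (fun θ => ellipticF m θ - θ) (1 / √(1 - m * sin θ ^ 2) - 1) θ :=
      fun θ => (hasDerivAt_ellipticF hm1 θ).sub (hasDerivAt_id θ)
    refine monotone_of_deriv_nonneg (fun θ => (hd θ).differentiableAt) fun θ => ?_
    rw [(hd θ).deriv, sub_nonneg, le_div_iff₀ (sqrt_pos.2 (one_sub_mul_sin_sq_pos hm1 θ)), one_mul]
    exact sqrt_one_sub_mul_sin_sq_le_one hm0 θ
  have := hmono hθ
  simp only [ellipticF_zero] at this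
  linarith

lemma surjective_ellipticF {m : ℝ} (hm0 : 0 ≤ m) (hm1 : m < 1) :
    Function.Surjective (ellipticF m) := by
  have hc : Continuous (ellipticF m) :=
    continuous_iff_continuousAt.2 fun θ => (hasDerivAt_ellipticF hm1 θ).continuousAt
  refine hc.surjective (Filter.tendsto_atTop_mono' _ ?_ Filter.tendsto_id)
    (Filter.tendsto_atBot_mono' _ ?_ Filter.tendsto_id)
  · filter_upwards [Filter.eventually_ge_atTop 0] with θ hθ using le_ellipticF hm0 hm1 hθ
  · filter_upwards [Filter.eventually_le_atBot 0] with θ hθ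
    have := le_ellipticF hm0 hm1 (neg_nonneg.2 hθ)
    rw [ellipticF_neg hm1] at this
    exact le_of_neg_le_neg this

/-- The Jacobi amplitude: an analytic inverse of the elliptic integral of the first kind. -/
lemma exists_jacobi_amplitude {m : ℝ} (hm0 : 0 ≤ m) (hm1 : m < 1) :
    ∃ am : ℝ → ℝ, (∀ t, AnalyticAt ℝ am t) ∧ (∀ t, ellipticF m (am t) = t) ∧
      (∀ θ, am (ellipticF m θ) = θ) ∧
      ∀ t, HasDerivAt am (√(1 - m * sin (am t) ^ 2)) t := by
  set e := ((strictMono_ellipticF hm1).orderIsoOfSurjective _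
    (surjective_ellipticF hm0 hm1)).toHomeomorph
  have hcoe : ⇑e = ellipticF m := rfl
  have hpos : ∀ θ, 0 < 1 / √(1 - m * sin θ ^ 2) := fun θ =>
    one_div_pos.2 (sqrt_pos.2 (one_sub_mul_sin_sq_pos hm1 θ))
  refine ⟨e.symm, fun t => ?_, fun t => ?_, fun θ => ?_, fun t => ?_⟩
  · have hF : ContDiff ℝ ⊤ (e : ℝ → ℝ) :=
      contDiff_omega_iff_analyticOnNhd.2 fun θ _ => analyticAt_ellipticF hm1 θ
    exact contDiff_omega_iff_analyticOnNhd.1 (e.contDiff_symm_deriv (fun θ => (hpos θ).ne')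
      (fun θ => hasDerivAt_ellipticF hm1 θ) hF) t (Set.mem_univ t)
  · rw [← hcoe, e.apply_symm_apply]
  · rw [← hcoe, e.symm_apply_apply]
  · refine (HasDerivAt.of_local_left_inverse e.symm.continuous.continuousAt
      (hasDerivAt_ellipticF hm1 _) (hpos _).ne' ?_).congr_deriv (by simp)
    exact Filter.Eventually.of_forall e.apply_symm_apply

lemma continuousOn_parametric_elliptic {M : ℝ} (hM : M < 1) {w : ℝ → ℝ} (hw : Continuous w) :
    ContinuousOn (fun m => ∫ x in (0 : ℝ)..(2 * π), w x / √(1 - m * sin x ^ 2))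
      (Set.Icc 0 M) := by
  rw [continuousOn_iff_continuous_domRestrict]
  refine intervalIntegral.continuous_parametric_intervalIntegral_of_continuous'
    (f := fun (m : Set.Icc (0 : ℝ) M) x => w x / √(1 - m * sin x ^ 2)) ?_ 0 (2 * π)
  refine Continuous.div (by fun_prop) (by fun_prop) fun p => ?_
  exact (sqrt_pos.2 (one_sub_mul_sin_sq_pos (p.1.2.2.trans_lt hM) p.2)).ne'

/-- Logarithmic divergence of the complete elliptic integral at the parameter `1`. -/
lemma le_ellipticF_two_pi (M : ℝ) :
    M ≤ ellipticF (1 - exp (-M) ^ 2) (2 * π) := by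
  set η := exp (-M) with hη
  have hη0 : 0 < η := exp_pos _
  have hm1 : 1 - η ^ 2 < 1 := by nlinarith
  have hcont := continuous_ellipticF_integrand hm1
  have hlog : ∫ x in (π / 2)..(π / 2 + 1), 1 / (x + (η - π / 2)) = log ((1 + η) / η) := by
    rw [intervalIntegral.integral_comp_add_right (fun x => 1 / x), integral_one_div]
    · ring_nf
    · rw [Set.uIcc_of_le (by linarith)]
      intro h0
      linarith [h0.1]
  have hle1 : ∫ x in (π / 2)..(π / 2 + 1), 1 / (x + (η - π / 2)) ≤
      ∫ x in (π / 2)..(π / 2 + 1), 1 / √(1 - (1 - η ^ 2) * sin x ^ 2) := by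
    refine intervalIntegral.integral_mono_on (by linarith) ?_ (hcont.intervalIntegrable _ _) ?_
    · refine ContinuousOn.intervalIntegrable ?_
      rw [Set.uIcc_of_le (by linarith)]
      refine continuousOn_const.div (by fun_prop) fun x hx => ?_
      exact (by linarith [hx.1] : 0 < x + (η - π / 2)).ne'
    · intro x hx
      have hx0 : 0 ≤ x - π / 2 := sub_nonneg.2 hx.1
      refine one_div_le_one_div_of_le (sqrt_pos.2 (one_sub_mul_sin_sq_pos hm1 x)) ?_
      refine sqrt_le_iff.2 ⟨by linarith, ?_⟩
      have hcos : cos x ^ 2 ≤ (x - π / 2) ^ 2 := by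
        rw [← sin_pi_div_two_sub x, ← neg_sub x, sin_neg, neg_sq]
        exact sq_le_sq.2 (abs_sin_le_abs)
      nlinarith [sin_sq_add_cos_sq x, mul_nonneg hx0 hη0.le, sq_nonneg (η * cos x)]
  have hle2 : ∫ x in (π / 2)..(π / 2 + 1), 1 / √(1 - (1 - η ^ 2) * sin x ^ 2) ≤
      ellipticF (1 - η ^ 2) (2 * π) := by
    refine intervalIntegral.integral_mono_interval (by positivity) (by linarith)
      (by linarith [pi_gt_three]) (Filter.Eventually.of_forall fun x => ?_)
      (hcont.intervalIntegrable _ _)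
    exact one_div_nonneg.2 (sqrt_nonneg _)
  have hM' : M ≤ log ((1 + η) / η) := by
    rw [le_log_iff_exp_le (by positivity), le_div_iff₀ hη0, hη, ← exp_add]
    simp only [add_neg_cancel, exp_zero]
    linarith
  linarith

lemma ellipticF_sub_le {m : ℝ} (hm0 : 0 ≤ m) (hm1 : m < 1) :
    ellipticF m (2 * π) - 2 * π ≤ ∫ x in (0 : ℝ)..(2 * π), sin x ^ 2 / √(1 - m * sin x ^ 2) := by
  have hpos : ∀ x, 0 < √(1 - m * sin x ^ 2) := fun x =>
    sqrt_pos.2 (one_sub_mul_sin_sq_pos hm1 x)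
  have hcont : Continuous fun x => sin x ^ 2 / √(1 - m * sin x ^ 2) :=
    Continuous.div (by fun_prop) (by fun_prop) fun x => (hpos x).ne'
  have h2 : ∫ x in (0 : ℝ)..(2 * π), (1 / √(1 - m * sin x ^ 2) - 1) =
      ellipticF m (2 * π) - 2 * π := by
    rw [intervalIntegral.integral_sub
      ((continuous_ellipticF_integrand hm1).intervalIntegrable _ _) (by simp)]
    simp [ellipticF]
  rw [← h2]
  refine intervalIntegral.integral_mono_on (by positivity)
    (((continuous_ellipticF_integrand hm1).sub continuous_const).intervalIntegrable _ _)
    (hcont.intervalIntegrable _ _) fun x _ => ?_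
  rw [sub_le_iff_le_add, div_add_one (hpos x).ne', div_le_div_iff_of_pos_right (hpos x)]
  have hsq := sq_sqrt (one_sub_mul_sin_sq_pos hm1 x).le
  have hle := sqrt_one_sub_mul_sin_sq_le_one hm0 x
  nlinarith [hpos x, sq_nonneg (sin x)]

/-- Every `lam ∈ (0, 1)` is attained by `2 m ⟨sn²⟩ / (1 + m)` for some parameter `m ∈ (0, 1)`. -/
lemma exists_elliptic_parameter {lam : ℝ} (hlam : lam ∈ Set.Ioo (0 : ℝ) 1) :
    ∃ m ∈ Set.Ioo (0 : ℝ) 1,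
      2 * m * ∫ x in (0 : ℝ)..(2 * π), sin x ^ 2 / √(1 - m * sin x ^ 2) =
        lam * (1 + m) * ellipticF m (2 * π) := by
  obtain ⟨hl0, hl1⟩ := hlam
  have hl : 0 < 1 - lam := sub_pos.2 hl1
  set M := 4 * π / (1 - lam) + 1 with hM
  have hM0 : 0 < M := by positivity
  have hMl : (1 - lam) * M = 4 * π + (1 - lam) := by rw [hM]; field_simp
  set m₁ := 1 - exp (-M) ^ 2 with hm₁
  have hexp0 : 0 < exp (-M) := exp_pos _
  have hexp : exp (-M) * (M + 1) ≤ 1 := by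
    have := mul_le_mul_of_nonneg_left (add_one_le_exp M) hexp0.le
    rwa [← exp_add, neg_add_cancel, exp_zero] at this
  have hexp1 : 2 * exp (-M) ≤ 1 - lam := by
    have h1 : exp (-M) * (4 * π) ≤ 1 - lam := by
      calc exp (-M) * (4 * π) ≤ exp (-M) * ((1 - lam) * M) := mul_le_mul_of_nonneg_left (by linarith) hexp0.le
        _ = (1 - lam) * (exp (-M) * M) := by ring
        _ ≤ (1 - lam) * 1 := by gcongr; linarith
        _ = 1 - lam := mul_one _
    nlinarith [pi_gt_three]
  have hε : 2 * exp (-M) ^ 2 ≤ 1 - lam := by nlinarith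
  have hm₁0 : 0 ≤ m₁ := by linarith
  have hm₁1 : m₁ < 1 := by rw [hm₁]; nlinarith
  set R : ℝ → ℝ := fun m => 2 * m * (∫ x in (0 : ℝ)..(2 * π), sin x ^ 2 / √(1 - m * sin x ^ 2)) -
    lam * (1 + m) * ellipticF m (2 * π) with hR
  have hRc : ContinuousOn R (Set.Icc 0 m₁) :=
    ((by fun_prop : ContinuousOn (fun m : ℝ => 2 * m) _).mul
      (continuousOn_parametric_elliptic hm₁1 (by fun_prop))).sub
      ((by fun_prop : ContinuousOn (fun m : ℝ => lam * (1 + m)) _).mul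
      (continuousOn_parametric_elliptic hm₁1 continuous_const))
  have hR0 : R 0 < 0 := by
    have : ellipticF 0 (2 * π) = 2 * π := by simp [ellipticF]
    simp only [hR, this]
    have := mul_pos hl0 two_pi_pos
    linarith
  have hR1 : 0 < R m₁ := by
    have hA := ellipticF_sub_le hm₁0 hm₁1
    have hB : M ≤ ellipticF m₁ (2 * π) := le_ellipticF_two_pi M
    have hcoef : 1 - lam ≤ 2 * m₁ - lam * (1 + m₁) := by
      rw [hm₁]
      nlinarith [mul_pos hl0 (pow_pos hexp0 2)]
    simp only [hR]
    have h1 := mul_le_mul_of_nonneg_left hA (by linarith : 0 ≤ 2 * m₁)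
    have h2 : (1 - lam) * M ≤ (2 * m₁ - lam * (1 + m₁)) * ellipticF m₁ (2 * π) :=
      mul_le_mul hcoef hB hM0.le (hl.le.trans hcoef)
    have h3 : m₁ * π ≤ π := mul_le_of_le_one_left pi_pos.le hm₁1.le
    linarith
  obtain ⟨m, hm, hRm⟩ := intermediate_value_Ioo hm₁0 hRc ⟨hR0, hR1⟩
  exact ⟨m, ⟨hm.1, hm.2.trans hm₁1⟩, sub_eq_zero.1 hRm⟩

theorem stmt_12 (lam : ℝ) (hlam : lam ∈ Set.Ioo (0 : ℝ) 1) :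
    ∃ g : ℝ → ℝ,
      (∀ t : ℝ, AnalyticAt ℝ g t) ∧
      (∀ t : ℝ, g (-t) = -g t) ∧
      Function.Periodic g (2 * π) ∧
      (∀ p : ℝ, 0 < p → Function.Periodic g p → 2 * π ≤ p) ∧
      g ≠ 0 ∧
      (∀ t : ℝ, deriv (deriv g) t + avg (fun s => g s ^ 2) * g t - lam * g t ^ 3 = 0) ∧
      (∀ h : ℝ → ℝ, ContDiff ℝ 2 h → (∀ t : ℝ, h (-t) = -h t) →
        Function.Periodic h (2 * π) →
        (∀ t : ℝ, deriv (deriv h) t + (avg (fun s => g s ^ 2) - 3 * lam * g t ^ 2) * h t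
            = -(2 * avg (fun s => g s * h s)) * g t) →
        h = 0) := by
  obtain ⟨m, ⟨hm0, hm1⟩, hm⟩ := exists_elliptic_parameter hlam
  obtain ⟨am, ham_an, hFam, hamF, ham⟩ := exists_jacobi_amplitude hm0.le hm1
  have hl0 : 0 < lam := hlam.1
  have hKpos : 0 < ellipticF m π := pi_pos.trans_le (le_ellipticF hm0.le hm1 pi_pos.le)
  have hK2 : ellipticF m (2 * π) = 2 * ellipticF m π := by
    rw [two_mul, ellipticF_add_pi hm1, two_mul]
  obtain ⟨Ω, hΩ⟩ : ∃ Ω, Ω = ellipticF m π / π := ⟨_, rfl⟩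
  have hΩpos : 0 < Ω := by rw [hΩ]; positivity
  have hΩπ : Ω * π = ellipticF m π := by rw [hΩ]; field_simp
  obtain ⟨V, hV, hVsq⟩ : ∃ V, 0 < V ∧ lam * V ^ 2 = 2 * m * Ω ^ 2 := by
    refine ⟨√(2 * m * Ω ^ 2 / lam), by positivity, ?_⟩
    rw [sq_sqrt (by positivity)]
    field_simp
  have ham_add : ∀ t, am (t + ellipticF m π) = am t + π := fun t => by
    conv_lhs => rw [← hFam t, ← ellipticF_add_pi hm1, hamF]
  have ham_neg : ∀ t, am (-t) = -am t := fun t => by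
    conv_lhs => rw [← hFam t, ← ellipticF_neg hm1, hamF]
  have ham0 : am 0 = 0 := by simpa [ellipticF_zero] using hamF 0
  set φ : ℝ → ℝ := fun t => am (Ω * t) with hφ
  have hφ_add : ∀ t, φ (t + π) = φ t + π := fun t => by
    simp only [hφ]
    rw [mul_add, hΩπ, ham_add]
  have hφ0 : φ 0 = 0 := by simp [hφ, ham0]
  have hφd : ∀ t, HasDerivAt φ (Ω * √(1 - m * sin (φ t) ^ 2)) t := fun t => by
    refine ((ham (Ω * t)).scomp t ((hasDerivAt_id t).const_mul Ω)).congr_deriv ?_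
    simp [hφ]
  have hpos : ∀ t, 0 < 1 - m * sin (φ t) ^ 2 := fun t => one_sub_mul_sin_sq_pos hm1 _
  set g : ℝ → ℝ := fun t => V * sin (φ t) with hg
  set g₁ : ℝ → ℝ := fun t => V * Ω * (cos (φ t) * √(1 - m * sin (φ t) ^ 2)) with hg₁
  have hg_add : ∀ t, g (t + π) = -g t := fun t => by
    simp only [hg, hφ_add, sin_add_pi]
    ring
  have hgper : Function.Periodic g (2 * π) := fun t => by
    rw [two_mul, ← add_assoc, hg_add, hg_add, neg_neg]
  have hg0 : g 0 = 0 := by simp [hg, hφ0]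
  have hg2π : g (2 * π) = 0 := by rw [← zero_add (2 * π), hgper, hg0]
  have hgd : ∀ t, HasDerivAt g (g₁ t) t := fun t => by
    refine ((hφd t).sin.const_mul V).congr_deriv ?_
    simp only [hg₁]
    ring
  have hg₁d : ∀ t, HasDerivAt g₁ (-(Ω ^ 2 * (1 + m)) * g t + lam * g t ^ 3) t := fun t => by
    have hD : HasDerivAt (fun t => √(1 - m * sin (φ t) ^ 2))
        (-(m * Ω * (sin (φ t) * cos (φ t)))) t := by
      refine ((((hφd t).sin.pow 2).const_mul m).const_sub 1).sqrt (hpos t).ne' |>.congr_deriv ?_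
      have := (sqrt_pos.2 (hpos t)).ne'
      simp only [Pi.pow_apply]
      push_cast
      field_simp
    refine (((hφd t).cos.mul hD).const_mul (V * Ω)).congr_deriv ?_
    have hsq := sq_sqrt (hpos t).le
    simp only [hg]
    linear_combination (-(V * Ω ^ 2 * sin (φ t))) * hsq - V * sin (φ t) ^ 3 * hVsq
      - V * Ω ^ 2 * m * sin (φ t) * sin_sq_add_cos_sq (φ t)
  have hg₁0 : g₁ 0 = V * Ω := by simp [hg₁, hφ0]
  have hgne : g ≠ 0 := fun h => by
    have h1 := (hgd 0).unique (h ▸ hasDerivAt_const (0 : ℝ) (0 : ℝ) : HasDerivAt g 0 0)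
    rw [hg₁0] at h1
    exact (mul_pos hV hΩpos).ne' h1
  have havg : avg (fun s => g s ^ 2) = Ω ^ 2 * (1 + m) := by
    have hd : ∀ θ, HasDerivAt (fun θ => ellipticF m θ / Ω) (1 / √(1 - m * sin θ ^ 2) / Ω) θ :=
      fun θ => (hasDerivAt_ellipticF hm1 θ).div_const Ω
    have hgc : Continuous g := continuous_iff_continuousAt.2 fun t => (hgd t).continuousAt
    have hsub := intervalIntegral.integral_comp_mul_deriv (a := 0) (b := 2 * π)
      (g := fun s => g s ^ 2) (fun θ _ => hd θ)
      ((continuous_ellipticF_integrand hm1).div_const Ω).continuousOn (hgc.pow 2)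
    have hend : ellipticF m (2 * π) / Ω = 2 * π := by
      rw [hK2, ← hΩπ]
      field_simp
    have hintegrand : ∀ θ, ((fun s => g s ^ 2) ∘ fun θ => ellipticF m θ / Ω) θ *
        (1 / √(1 - m * sin θ ^ 2) / Ω) =
        V ^ 2 / Ω * (sin θ ^ 2 / √(1 - m * sin θ ^ 2)) := fun θ => by
      simp only [Function.comp, hg, hφ, mul_div_cancel₀ _ hΩpos.ne', hamF]
      ring
    simp only [hintegrand, ellipticF_zero, zero_div, hend, intervalIntegral.integral_const_mul] at hsub
    rw [avg, ← hsub]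
    rw [hK2, ← hΩπ] at hm
    generalize (∫ x in (0 : ℝ)..(2 * π), sin x ^ 2 / √(1 - m * sin x ^ 2)) = A at hm ⊢
    have hmul : lam * (V ^ 2 * A) = lam * (Ω ^ 3 * (1 + m) * (2 * π)) := by
      linear_combination A * hVsq + Ω ^ 2 * hm
    have := mul_left_cancel₀ hl0.ne' hmul
    field_simp
    linear_combination this
  refine ⟨g, fun t => ?_, fun t => ?_, hgper, fun p hp hgp => ?_, hgne, fun t => ?_,
    fun h hh hodd hhper heq => ?_⟩
  · have h1 : AnalyticAt ℝ φ t := (ham_an (Ω * t)).comp (analyticAt_const.mul analyticAt_id)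
    exact analyticAt_const.mul (analyticAt_sin.comp h1)
  · simp only [hg, hφ, mul_neg, ham_neg, sin_neg]
  · have hgp0 : g p = 0 := by rw [← zero_add p, hgp, hg0]
    obtain ⟨n, hn⟩ := sin_eq_zero_iff.1 ((mul_eq_zero.1 hgp0).resolve_left hV.ne')
    have hφmono : StrictMono φ := strictMono_of_deriv_pos fun t => by
      rw [(hφd t).deriv]
      exact mul_pos hΩpos (sqrt_pos.2 (hpos t))
    have hnpos : 0 < n := by
      have h1 := hφmono hp
      rw [hφ0, ← hn] at h1
      exact_mod_cast pos_of_mul_pos_left h1 pi_pos.le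
    have hn1 : n ≠ 1 := by
      rintro rfl
      have hpπ : p = π := hφmono.injective (by
        rw [← hn, ← zero_add π, hφ_add, hφ0]
        simp)
      refine hgne (funext fun t => ?_)
      have h1 := hgp t
      rw [hpπ, hg_add] at h1
      exact self_eq_neg.1 h1.symm
    have hn2 : (2 : ℝ) ≤ n := by exact_mod_cast (by omega : 2 ≤ n)
    refine hφmono.le_iff_le.1 ?_
    rw [← hn, two_mul, hφ_add, ← zero_add π, hφ_add, hφ0]
    nlinarith [pi_pos]
  · have hd1 : deriv g = g₁ := funext fun s => (hgd s).deriv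
    rw [hd1, (hg₁d t).deriv, havg]
    ring
  · have hh0 : h 0 = 0 := by
      have := hodd 0
      rw [neg_zero] at this
      exact self_eq_neg.1 this
    refine duffing_nondegenerate hlam hgd hg₁d hg0 hg2π havg ?_ ?_ hh hh0 ?_ ?_
    · rw [hg₁0]
      exact (mul_pos hV hΩpos).ne'
    · have h1 : 0 < (Ω ^ 2) ^ 2 * (1 - m) ^ 2 :=
        mul_pos (by positivity) (pow_pos (sub_pos.2 hm1) 2)
      rw [hg₁0]
      linear_combination h1 + 2 * Ω ^ 2 * hVsq
    · rw [← zero_add (2 * π), hhper, hh0]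
    · rwa [havg] at heq
end
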